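/- Let n ≥ 3 be an integer. Let ψ ∈ 𝒜 satisfy lim_{r→+∞} ψ(r) = +∞, and assume there exists a positive function h ∈ C¹(ℝ) satisfying: (i) lim_{τ→+∞} h'(τ)/h(τ) = 0; (ii) for every function ε : ℝ → ℝ with lim_{τ→+∞} ε(τ) = 0, one has lim_{τ→+∞} h(τ + (1/(n−1))log h(τ) + (1/(n−1))log((n−1)/(n−2)) + ε(τ)) / h(τ) = 1; and (iii) lim_{r→+∞} (log ψ)'(r) / h(log ψ(r)) = 1. Then ∫₁^∞ ψ(t)^{−(n−1)} dt < ∞, so the change of variables s = s(r) defined by 1/((n−2)s^{n−2}) = ∫_r^∞ ψ(t)^{−(n−1)} dt is a well-defined increasing bijection of (0,∞) onto (0,∞) with inverse r = r(s), and the weight ρ(s) := ψ(r(s))^{2(n−1)}/s^{2(n−1)} belongs to ℬ and satisfies: ρ(s) ∼ ((n−2)/(n−1))² / ( s² · [h( ((n−2)/(n−1)) log s )]² ) as s → +∞, and lim_{s→+∞} s ρ'(s)/ρ(s) = −2. -/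

import Mathlib

/-- The class `𝒜` of model functions: `ψ ∈ C^∞((0,∞)) ∩ C¹([0,∞))` with `ψ(0) = 0`,
`ψ'(0) = 1` (one-sided derivative) and `ψ > 0` on `(0,∞)`. -/
def classA (ψ : ℝ → ℝ) : Prop :=
  ContDiffOn ℝ (⊤ : ℕ∞) ψ (Set.Ioi 0) ∧ ContDiffOn ℝ 1 ψ (Set.Ici 0) ∧
  ψ 0 = 0 ∧ derivWithin ψ (Set.Ici 0) 0 = 1 ∧ ∀ r > (0 : ℝ), 0 < ψ r

/-- The class `ℬ` of weights: `ρ ∈ C^∞((0,∞))`, positive, extending continuously to `0`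
with value `1`, and with `s ρ'(s) → 0` as `s → 0⁺`. -/
def classB (ρ : ℝ → ℝ) : Prop :=
  ContDiffOn ℝ (⊤ : ℕ∞) ρ (Set.Ioi 0) ∧
  Filter.Tendsto ρ (nhdsWithin 0 (Set.Ioi 0)) (nhds 1) ∧
  Filter.Tendsto (fun s => s * deriv ρ s) (nhdsWithin 0 (Set.Ioi 0)) (nhds 0) ∧
  ∀ s > (0 : ℝ), 0 < ρ s

/-- The change of variables `s = s(r)` determined by
`1/((n-2) s^{n-2}) = ∫_r^∞ ψ(t)^{-(n-1)} dt`, i.e.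
`s(r) = ((n-2) ∫_r^∞ ψ(t)^{-(n-1)} dt)^{-1/(n-2)}`. -/
noncomputable def Svar (n : ℕ) (ψ : ℝ → ℝ) (r : ℝ) : ℝ :=
  (((n : ℝ) - 2) * ∫ t in Set.Ioi r, 1 / ψ t ^ (n - 1)) ^ (-(1 / ((n : ℝ) - 2)))

/-!
Put `τ = log ψ(r)`, so that `dτ/dr ∼ h(τ)` by (iii). Since `h` varies slowly, differentiating
`e^{-(n-1)τ} / h(τ)` shows by L'Hôpital's rule that the tail integral of `ψ^{-(n-1)}` is equivalent
to `1 / ((n-1) ψ^{n-1} h(τ))`. Hence `s^{n-2} ∼ (n-1)/(n-2) · ψ^{n-1} h(τ)`, that is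
`(n-2)/(n-1) · log s = τ + (log h(τ) + log ((n-1)/(n-2))) / (n-1) + o(1)`, and (ii) turns this into
`h((n-2)/(n-1) · log s) ∼ h(τ)`; the asymptotics of `ρ` follow. Differentiating the definition of
`s` gives `dr/ds = (ψ/s)^{n-1}`, so that `s ρ'/ρ = 2(n-1) (ψ' (ψ/s)^{n-2} - 1)`, whose limit at
infinity comes from the same two equivalences. At `0` everything reduces to `ψ/s → 1`, which is
L'Hôpital's rule applied to the tail integral and `1 / ((n-2) ψ^{n-2})`.
-/

open Asymptotics Filter MeasureTheory Set Topology

section Comparison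

variable {f f' g g' : ℝ → ℝ} {l : Filter ℝ}

lemma abs_sub_le_mul_abs_sub_of_hasDerivAt {a b c : ℝ}
    (hf : ∀ x ∈ uIcc a b, HasDerivAt f (f' x) x) (hg : ∀ x ∈ uIcc a b, HasDerivAt g (g' x) x)
    (hg' : ∀ x ∈ uIcc a b, g' x ≠ 0) (hle : ∀ x ∈ uIcc a b, |f' x| ≤ c * |g' x|) :
    |f b - f a| ≤ c * |g b - g a| := by
  wlog hab : a < b generalizing a b
  · rcases (not_lt.1 hab).eq_or_lt with rfl | hba
    · simp
    · rw [abs_sub_comm (f b), abs_sub_comm (g b)]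
      rw [uIcc_comm] at hf hg hg' hle
      exact this hf hg hg' hle hba
  rw [uIcc_of_le hab.le] at hf hg hg' hle
  obtain ⟨x, hx, hcauchy⟩ := exists_ratio_hasDerivAt_eq_ratio_slope f f' hab
    (fun y hy => (hf y hy).continuousAt.continuousWithinAt)
    (fun y hy => hf y (Ioo_subset_Icc_self hy)) g g'
    (fun y hy => (hg y hy).continuousAt.continuousWithinAt)
    (fun y hy => hg y (Ioo_subset_Icc_self hy))
  have hx := Ioo_subset_Icc_self hx
  refine le_of_mul_le_mul_right ?_ (abs_pos.2 (hg' x hx))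
  calc |f b - f a| * |g' x| = |g b - g a| * |f' x| := by rw [← abs_mul, ← hcauchy, abs_mul]
    _ ≤ |g b - g a| * (c * |g' x|) := by gcongr; exact hle x hx
    _ = c * |g b - g a| * |g' x| := by ring

variable [TendstoIxxClass Icc l l]

lemma isLittleO_of_hasDerivAt (hf : ∀ᶠ x in l, HasDerivAt f (f' x) x)
    (hg : ∀ᶠ x in l, HasDerivAt g (g' x) x) (hg' : ∀ᶠ x in l, g' x ≠ 0)
    (htop : Tendsto (fun x => |g x|) l atTop) (h : f' =o[l] g') : f =o[l] g := by
  rcases l.eq_or_neBot with rfl | _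
  · simp [isLittleO_iff]
  refine IsLittleO.of_bound fun c hc => ?_
  have hev : ∀ᶠ x in l, HasDerivAt f (f' x) x ∧ HasDerivAt g (g' x) x ∧ g' x ≠ 0 ∧
      |f' x| ≤ c / 2 * |g' x| := by
    filter_upwards [hf, hg, hg', h.bound (half_pos hc)] using fun x h₁ h₂ h₃ h₄ => ⟨h₁, h₂, h₃, h₄⟩
  have hIcc : ∀ᶠ p in l ×ˢ l, ∀ x ∈ uIcc p.1 p.2, HasDerivAt f (f' x) x ∧
      HasDerivAt g (g' x) x ∧ g' x ≠ 0 ∧ |f' x| ≤ c / 2 * |g' x| :=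
    (TendstoIxxClass.tendsto_Ixx (Ixx := uIcc) (l₁ := l)).eventually hev.smallSets
  obtain ⟨a, ha⟩ := hIcc.curry.exists
  filter_upwards [ha, htop.eventually_ge_atTop ((|f a| + c / 2 * |g a|) / (c / 2))] with b hb hgb
  rw [div_le_iff₀ (half_pos hc)] at hgb
  have hsub : |f b - f a| ≤ c / 2 * |g b - g a| := abs_sub_le_mul_abs_sub_of_hasDerivAt
    (fun x hx => (hb x hx).1) (fun x hx => (hb x hx).2.1) (fun x hx => (hb x hx).2.2.1)
    (fun x hx => (hb x hx).2.2.2)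
  calc |f b| ≤ |f a| + |f b - f a| := by simpa using abs_add_le (f a) (f b - f a)
    _ ≤ |f a| + c / 2 * (|g b| + |g a|) := by
      gcongr
      exact hsub.trans (by gcongr; exact abs_sub _ _)
    _ ≤ c * |g b| := by linarith

lemma isEquivalent_of_hasDerivAt (hf : ∀ᶠ x in l, HasDerivAt f (f' x) x)
    (hg : ∀ᶠ x in l, HasDerivAt g (g' x) x) (hg' : ∀ᶠ x in l, g' x ≠ 0)
    (htop : Tendsto (fun x => |g x|) l atTop) (h : f' ~[l] g') : f ~[l] g :=
  isLittleO_of_hasDerivAt (by filter_upwards [hf, hg] with x hfx hgx using hfx.sub hgx)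
    hg hg' htop h

end Comparison

section Tail

lemma hasDerivAt_integral_Ioi {E : Type*} [NormedAddCommGroup E] [NormedSpace ℝ E]
    [CompleteSpace E] {q : ℝ → E} {a r : ℝ} (hq : IntegrableOn q (Ioi a)) (har : a < r)
    (hcont : ContinuousAt q r) : HasDerivAt (fun x => ∫ t in Ioi x, q t) (-q r) r := by
  have hint : ∀ x > a, IntegrableOn q (Ioi x) := fun x hx => hq.mono_set (Ioi_subset_Ioi hx.le)
  have hFTC : HasDerivAt (fun x => ∫ t in r..x, q t) (q r) r :=
    intervalIntegral.integral_hasDerivAt_right IntervalIntegrable.refl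
      ⟨Ioi a, Ioi_mem_nhds har, hq.aestronglyMeasurable⟩ hcont
  refine (hFTC.const_sub (∫ t in Ioi r, q t)).congr_of_eventuallyEq ?_
  filter_upwards [Ioi_mem_nhds har] with x hx
  rw [← intervalIntegral.integral_interval_add_Ioi (hint r har) (hint x hx), add_sub_cancel_left]

lemma setIntegral_Ioi_pos {q : ℝ → ℝ} {a : ℝ} (hq : IntegrableOn q (Ioi a))
    (hpos : ∀ t > a, 0 < q t) : 0 < ∫ t in Ioi a, q t := by
  have hnonneg : 0 ≤ᵐ[volume.restrict (Ioi a)] q :=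
    ae_restrict_of_forall_mem measurableSet_Ioi fun t ht => (hpos t ht).le
  have hsupport : Function.support q ∩ Ioi a = Ioi a :=
    inter_eq_right.2 fun t ht => (hpos t ht).ne'
  rw [setIntegral_pos_iff_support_of_nonneg_ae hnonneg hq, hsupport]
  simp

variable {F F' q : ℝ → ℝ} (hF : ∀ᶠ x in atTop, HasDerivAt F (F' x) x)
  (hF₀ : Tendsto F atTop (𝓝 0)) (hequiv : F' ~[atTop] -q) (hpos : ∀ᶠ x in atTop, 0 < q x)
  (hcont : ∀ᶠ x in atTop, ContinuousAt q x)
include hF hF₀ hequiv hpos hcont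

lemma integrableAtFilter_atTop_of_hasDerivAt : IntegrableAtFilter q atTop := by
  have hneg : ∀ᶠ x in atTop, F' x < 0 := hequiv.eventually_neg (by simpa using hpos)
  obtain ⟨R, hR⟩ := eventually_atTop.1 (hF.and (hneg.and hcont))
  have hint : IntegrableOn F' (Ioi R) := integrableOn_Ioi_deriv_of_nonpos'
    (fun x hx => (hR x hx).1) (fun x hx => (hR x hx.le).2.1.le) hF₀
  have hcontOn : ContinuousOn q (Ioi R) := fun x hx => (hR x hx.le).2.2.continuousWithinAt
  exact (isBigO_neg_left.1 hequiv.isBigO_symm).integrableAtFilter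
    ⟨Ioi R, Ioi_mem_atTop R, hcontOn.aestronglyMeasurable measurableSet_Ioi⟩
    ⟨Ioi R, Ioi_mem_atTop R, hint⟩

lemma integral_Ioi_isEquivalent_of_hasDerivAt : (fun x => ∫ t in Ioi x, q t) ~[atTop] F := by
  have hF' : ∀ᶠ x in atTop, F' x ≠ 0 :=
    (hequiv.eventually_neg (by simpa using hpos)).mono fun x hx => hx.ne
  obtain ⟨a, ha⟩ := integrableAtFilter_atTop_iff.1
    (integrableAtFilter_atTop_of_hasDerivAt hF hF₀ hequiv hpos hcont)
  have hI : ∀ᶠ x in atTop, HasDerivAt (fun x => ∫ t in Ioi x, q t) (-q x) x := by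
    filter_upwards [eventually_gt_atTop a, hcont] with x hx hcontx
    exact hasDerivAt_integral_Ioi (ha.mono_set Ioi_subset_Ici_self) hx hcontx
  refine isEquivalent_of_tendsto_one (HasDerivAt.lhopital_zero_atTop hI hF hF'
    (tendsto_integral_Ioi_zero tendsto_id) hF₀ ?_)
  exact (isEquivalent_iff_tendsto_one hF').1 hequiv.symm

end Tail

section SlowlyVarying

variable {h φ : ℝ → ℝ} {p : ℝ}

lemma log_isLittleO_id_of_logDeriv_tendsto_zero (hd : ∀ᶠ τ in atTop, DifferentiableAt ℝ h τ)
    (hne : ∀ᶠ τ in atTop, h τ ≠ 0) (hlog : Tendsto (logDeriv h) atTop (𝓝 0)) :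
    (fun τ => Real.log (h τ)) =o[atTop] id := by
  refine isLittleO_of_hasDerivAt (f' := logDeriv h) (g' := fun _ => 1) ?_
    (.of_forall hasDerivAt_id) (by simp) tendsto_abs_atTop_atTop
    ((isLittleO_one_iff ℝ).2 hlog)
  filter_upwards [hd, hne] with τ hdτ hneτ using hdτ.hasDerivAt.log hneτ

lemma hasDerivAt_exp_neg_mul_div {τ : ℝ} (hd : DifferentiableAt ℝ h τ) (hne : h τ ≠ 0) (p : ℝ) :
    HasDerivAt (fun x => Real.exp (-(p * x)) / h x)
      (-((p + logDeriv h τ) * (Real.exp (-(p * τ)) / h τ))) τ := by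
  have hexp : HasDerivAt (fun x => Real.exp (-(p * x))) (Real.exp (-(p * τ)) * -(p * 1)) τ :=
    ((hasDerivAt_id τ).const_mul p).neg.exp
  refine (hexp.div hd.hasDerivAt hne).congr_deriv ?_
  rw [logDeriv_apply]
  field_simp
  ring

variable (hd : ∀ᶠ τ in atTop, DifferentiableAt ℝ h τ) (hpos : ∀ᶠ τ in atTop, 0 < h τ)
  (hlog : Tendsto (logDeriv h) atTop (𝓝 0)) (hp : 0 < p)
include hd hpos hlog hp

lemma tendsto_exp_neg_mul_div_zero :
    Tendsto (fun τ => Real.exp (-(p * τ)) / h τ) atTop (𝓝 0) := by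
  have hlog_o : (fun τ => Real.log (h τ)) =o[atTop] fun τ => p * τ :=
    (log_isLittleO_id_of_logDeriv_tendsto_zero hd (hpos.mono fun τ hτ => hτ.ne') hlog).trans_isBigO
      (isBigO_self_const_mul hp.ne' _ _)
  have htop : Tendsto (fun τ => p * τ + Real.log (h τ)) atTop atTop :=
    (IsEquivalent.refl.add_isLittleO hlog_o).symm.tendsto_atTop (tendsto_id.const_mul_atTop hp)
  refine (Real.tendsto_exp_neg_atTop_nhds_zero.comp htop).congr' ?_
  filter_upwards [hpos] with τ hτ
  rw [Function.comp_apply, neg_add, Real.exp_add, Real.exp_neg (Real.log _), Real.exp_log hτ,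
    div_eq_mul_inv]

variable (hφd : ∀ᶠ r in atTop, DifferentiableAt ℝ φ r) (hφ : Tendsto φ atTop atTop)
  (hφ' : deriv φ ~[atTop] h ∘ φ)
include hφd hφ hφ'

lemma exists_hasDerivAt_isEquivalent_neg_exp :
    ∃ F' : ℝ → ℝ,
      (∀ᶠ r in atTop, HasDerivAt (fun r => Real.exp (-(p * φ r)) / h (φ r) / p) (F' r) r) ∧
      F' ~[atTop] -fun r => Real.exp (-(p * φ r)) := by
  refine ⟨fun r => -((p + logDeriv h (φ r)) * (Real.exp (-(p * φ r)) / h (φ r))) * deriv φ r / p,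
    ?_, ?_⟩
  · filter_upwards [hφd, hφ.eventually hd, hφ.eventually hpos] with r hφr hdr hposr
    exact ((hasDerivAt_exp_neg_mul_div hdr hposr.ne' p).comp r hφr.hasDerivAt).div_const p
  · have hφ'_ratio := (isEquivalent_iff_tendsto_one
      ((hφ.eventually hpos).mono fun r hr => hr.ne')).1 hφ'
    have hfactor : Tendsto (fun r => (p + logDeriv h (φ r)) / p * (deriv φ r / h (φ r)))
        atTop (𝓝 1) := by
      simpa [hp.ne'] using (((hlog.comp hφ).const_add p).div_const p).mul hφ'_ratio
    refine isEquivalent_of_tendsto_one (hfactor.congr fun r => ?_)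
    simp only [Pi.div_apply, Pi.neg_apply]
    field_simp

lemma integrableAtFilter_exp_neg_mul :
    IntegrableAtFilter (fun r => Real.exp (-(p * φ r))) atTop := by
  obtain ⟨F', hF, hequiv⟩ := exists_hasDerivAt_isEquivalent_neg_exp hd hpos hlog hp hφd hφ hφ'
  refine integrableAtFilter_atTop_of_hasDerivAt hF ?_ hequiv (.of_forall fun r => Real.exp_pos _)
    (hφd.mono fun r hr => (hr.continuousAt.const_mul p).neg.rexp)
  simpa using ((tendsto_exp_neg_mul_div_zero hd hpos hlog hp).comp hφ).div_const p

lemma integral_Ioi_exp_neg_mul_isEquivalent :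
    (fun r => ∫ t in Ioi r, Real.exp (-(p * φ t))) ~[atTop]
      fun r => Real.exp (-(p * φ r)) / h (φ r) / p := by
  obtain ⟨F', hF, hequiv⟩ := exists_hasDerivAt_isEquivalent_neg_exp hd hpos hlog hp hφd hφ hφ'
  refine integral_Ioi_isEquivalent_of_hasDerivAt hF ?_ hequiv (.of_forall fun r => Real.exp_pos _)
    (hφd.mono fun r hr => (hr.continuousAt.const_mul p).neg.rexp)
  simpa using ((tendsto_exp_neg_mul_div_zero hd hpos hlog hp).comp hφ).div_const p

end SlowlyVarying
section Reparametrization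

lemma tendsto_comp_of_rightInvOn {α β δ : Type*} {S : α → β} {T : β → α} {G : β → α → δ}
    {t : Set β} {l : Filter β} {l' : Filter α} {m : Filter δ} (hinv : RightInvOn T S t) (ht : t ∈ l)
    (hT : Tendsto T l l') (hG : Tendsto (fun r => G (S r) r) l' m) :
    Tendsto (fun s => G s (T s)) l m := by
  refine (hG.comp hT).congr' ?_
  filter_upwards [ht] with s hs
  rw [Function.comp_apply, hinv hs]

variable {α β γ δ : Type*} [LinearOrder α] [LinearOrder β] [TopologicalSpace γ] {φ : α → β}
  {R : α} {e : α → γ} {c : γ}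

lemma exists_tendsto_comp_eqOn (hφ : StrictMonoOn φ (Ici R)) (he : Tendsto e atTop (𝓝 c)) :
    ∃ ε : β → γ, Tendsto ε atTop (𝓝 c) ∧ EqOn (ε ∘ φ) e (Ici R) := by
  set ε : β → γ := Function.extend (fun r : Ici R => φ r) (fun r => e r) fun _ => c
  have hε : ∀ r : Ici R, ε (φ r) = e r :=
    (injOn_iff_injective.1 hφ.injOn).extend_apply (fun r : Ici R => e r) fun _ => c
  have : Nonempty α := ⟨R⟩
  refine ⟨ε, tendsto_def.2 fun U hU => ?_, fun r hr => hε ⟨r, hr⟩⟩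
  obtain ⟨R', hR'⟩ := eventually_atTop.1 ((he.eventually_mem hU).and (eventually_ge_atTop R))
  filter_upwards [eventually_ge_atTop (φ R')] with τ hτ
  rw [mem_preimage]
  by_cases hmem : ∃ r : Ici R, φ r = τ
  · obtain ⟨r, rfl⟩ := hmem
    rw [hε]
    exact (hR' r ((hφ.le_iff_le (hR' R' le_rfl).2 r.2).1 hτ)).1
  · rw [show ε τ = c from Function.extend_apply' _ _ _ hmem]
    exact mem_of_mem_nhds hU

/-- Applies a hypothesis on all error terms `ε τ` to an error term `e r` given in terms of another
parameter `r`, where `τ = φ r`. -/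
lemma tendsto_comp_of_forall_tendsto {F : β → γ → δ} {l : Filter δ}
    (hF : ∀ ε : β → γ, Tendsto ε atTop (𝓝 c) → Tendsto (fun τ => F τ (ε τ)) atTop l)
    (hmono : StrictMonoOn φ (Ici R)) (hφ : Tendsto φ atTop atTop) (he : Tendsto e atTop (𝓝 c)) :
    Tendsto (fun r => F (φ r) (e r)) atTop l := by
  obtain ⟨ε, hε, hεφ⟩ := exists_tendsto_comp_eqOn hmono he
  refine ((hF ε hε).comp hφ).congr' ?_
  filter_upwards [eventually_ge_atTop R] with r hr
  rw [Function.comp_apply, ← hεφ hr, Function.comp_apply]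

end Reparametrization

section MonotoneBijection

variable {f g : ℝ → ℝ} {a b : ℝ}

lemma bijOn_Ioi_of_tendsto (hmono : StrictMonoOn f (Ioi a)) (hcont : ContinuousOn f (Ioi a))
    (hbot : Tendsto f (𝓝[>] a) (𝓝 b)) (htop : Tendsto f atTop atTop) :
    BijOn f (Ioi a) (Ioi b) := by
  refine ⟨fun x hx => ?_, hmono.injOn, fun y hy => ?_⟩
  · obtain ⟨z, haz, hzx⟩ := exists_between (mem_Ioi.1 hx)
    have hbz : b ≤ f z := le_of_tendsto hbot <| by
      filter_upwards [Ioc_mem_nhdsGT haz] with w hw using hmono.monotoneOn hw.1 haz hw.2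
    exact hbz.trans_lt (hmono haz hx hzx)
  · obtain ⟨x, hxy, hx⟩ := ((hbot.eventually_lt_const hy).and self_mem_nhdsWithin).exists
    obtain ⟨z, hyz, hz⟩ := ((htop.eventually_ge_atTop y).and (eventually_gt_atTop a)).exists
    exact isPreconnected_Ioi.intermediate_value hx hz hcont ⟨hxy.le, hyz⟩

lemma tendsto_atTop_of_monotoneOn_of_surjOn (hmono : MonotoneOn g (Ioi b))
    (hsurj : SurjOn g (Ioi b) (Ioi a)) : Tendsto g atTop atTop := by
  refine tendsto_atTop.2 fun c => ?_
  obtain ⟨s, hs, hgs⟩ := hsurj (mem_Ioi.2 (lt_max_of_lt_right (lt_add_one a)) :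
    max c (a + 1) ∈ Ioi a)
  filter_upwards [eventually_ge_atTop s] with t hst
  exact (le_max_left c (a + 1)).trans (hgs ▸ hmono hs (mem_Ioi.2 (hs.trans_le hst)) hst)

lemma tendsto_nhdsGT_of_monotoneOn_of_image_eq (hmono : MonotoneOn g (Ioi b))
    (himage : g '' Ioi b = Ioi a) : Tendsto g (𝓝[>] b) (𝓝[>] a) := by
  have hbdd : BddBelow (g '' Ioi b) := himage ▸ bddBelow_Ioi
  refine tendsto_nhdsWithin_iff.2 ⟨?_, ?_⟩
  · simpa [himage, csInf_Ioi] using hmono.tendsto_nhdsGT hbdd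
  · filter_upwards [self_mem_nhdsWithin] with s hs using himage ▸ mem_image_of_mem g hs

lemma hasDerivAt_of_rightInvOn_Ioi (hmono : StrictMonoOn f (Ioi a))
    (hg : BijOn g (Ioi b) (Ioi a)) (hinv : RightInvOn g f (Ioi b)) {f' s : ℝ} (hs : b < s)
    (hf : HasDerivAt f f' (g s)) (hf' : f' ≠ 0) : HasDerivAt g f'⁻¹ s := by
  have hgmono : StrictMonoOn g (Ioi b) :=
    (Function.monotoneOn_of_rightInvOn_of_mapsTo hmono.monotoneOn hinv
      hg.mapsTo).strictMonoOn_of_injOn hg.injOn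
  have hgcont : ContinuousAt g s := hgmono.continuousAt_of_image_mem_nhds (Ioi_mem_nhds hs)
    (hg.image_eq ▸ Ioi_mem_nhds (hg.mapsTo hs))
  exact hf.of_local_left_inverse hgcont hf' <| by
    filter_upwards [Ioi_mem_nhds hs] with t ht using hinv ht

end MonotoneBijection

section Smoothness

lemma contDiffOn_infty_of_hasDerivAt {E : Type*} [NormedAddCommGroup E] [NormedSpace ℝ E]
    {u : ℝ → E} {F : ℝ × E → E} {U : Set ℝ} {V : Set (ℝ × E)} (hU : IsOpen U)
    (hF : ContDiffOn ℝ (⊤ : ℕ∞) F V) (hmaps : MapsTo (fun s => (s, u s)) U V)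
    (hu : ∀ s ∈ U, HasDerivAt u (F (s, u s)) s) : ContDiffOn ℝ (⊤ : ℕ∞) u U := by
  rw [contDiffOn_infty] at hF ⊢
  intro k
  induction k with
  | zero =>
    rw [Nat.cast_zero, contDiffOn_zero]
    exact fun s hs => (hu s hs).continuousAt.continuousWithinAt
  | succ k ih =>
    rw [Nat.cast_succ, contDiffOn_succ_iff_deriv_of_isOpen hU]
    refine ⟨fun s hs => (hu s hs).differentiableAt.differentiableWithinAt, by simp, ?_⟩
    exact ((hF k).comp (contDiffOn_id.prodMk ih) hmaps).congr fun s hs => (hu s hs).deriv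

end Smoothness

section TailIntegral

/-- The tail `∫_r^∞ ψ(t)^{-m} dt`. For `m = n - 1` it is the integral defining the change of
variables `Svar n ψ`. -/
noncomputable def tailIntegral (m : ℕ) (ψ : ℝ → ℝ) (r : ℝ) : ℝ :=
  ∫ t in Ioi r, 1 / ψ t ^ m

lemma tendsto_tailIntegral_atTop (m : ℕ) (ψ : ℝ → ℝ) :
    Tendsto (tailIntegral m ψ) atTop (𝓝 0) :=
  tendsto_integral_Ioi_zero tendsto_id

variable {m : ℕ} {ψ : ℝ → ℝ} {r : ℝ} (hcont : ContinuousOn ψ (Ioi 0)) (hpos : ∀ r > 0, 0 < ψ r)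
include hcont hpos

lemma continuousOn_one_div_pow (m : ℕ) : ContinuousOn (fun t => 1 / ψ t ^ m) (Ioi 0) :=
  continuousOn_const.div (hcont.pow m) fun t ht => (pow_pos (hpos t ht) m).ne'

variable (hint : IntegrableAtFilter (fun t => 1 / ψ t ^ m) atTop) (hr : 0 < r)
include hint hr

lemma integrableOn_Ioi_one_div_pow : IntegrableOn (fun t => 1 / ψ t ^ m) (Ioi r) :=
  (integrableOn_Ici_iff_integrableAtFilter_atTop.2 ⟨hint,
    ((continuousOn_one_div_pow hcont hpos m).mono (Ici_subset_Ioi.2 hr)).locallyIntegrableOn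
      measurableSet_Ici⟩).mono_set Ioi_subset_Ici_self

lemma hasDerivAt_tailIntegral : HasDerivAt (tailIntegral m ψ) (-(1 / ψ r ^ m)) r :=
  hasDerivAt_integral_Ioi (integrableOn_Ioi_one_div_pow hcont hpos hint (half_pos hr))
    (half_lt_self hr) ((continuousOn_one_div_pow hcont hpos m).continuousAt (Ioi_mem_nhds hr))

lemma tailIntegral_pos : 0 < tailIntegral m ψ r :=
  setIntegral_Ioi_pos (integrableOn_Ioi_one_div_pow hcont hpos hint hr)
    fun t ht => one_div_pos.2 (pow_pos (hpos t (hr.trans ht)) m)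

end TailIntegral

section ChangeOfVariables

-- The dimension is written `n = k + 2` with `k ≠ 0`, so that no exponent involves truncated
-- subtraction.

variable {k : ℕ} {ψ : ℝ → ℝ} {r : ℝ}

lemma Svar_add_two (k : ℕ) (ψ : ℝ → ℝ) (r : ℝ) :
    Svar (k + 2) ψ r = (k * tailIntegral (k + 1) ψ r) ^ (-(1 / (k : ℝ))) := by
  have hcast : ((k + 2 : ℕ) : ℝ) - 2 = k := by push_cast; ring
  rw [Svar, hcast]
  rfl

variable (hk : k ≠ 0) (hcont : ContinuousOn ψ (Ioi 0)) (hpos : ∀ r > 0, 0 < ψ r)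
  (hint : IntegrableAtFilter (fun t => 1 / ψ t ^ (k + 1)) atTop)
include hk hcont hpos hint

lemma natCast_mul_tailIntegral_pos (hr : 0 < r) : 0 < k * tailIntegral (k + 1) ψ r :=
  mul_pos (by positivity) (tailIntegral_pos hcont hpos hint hr)

lemma Svar_pos (hr : 0 < r) : 0 < Svar (k + 2) ψ r := by
  rw [Svar_add_two]
  exact Real.rpow_pos_of_pos (natCast_mul_tailIntegral_pos hk hcont hpos hint hr) _

lemma Svar_pow (hr : 0 < r) : Svar (k + 2) ψ r ^ k = (k * tailIntegral (k + 1) ψ r)⁻¹ := by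
  have hI := natCast_mul_tailIntegral_pos hk hcont hpos hint hr
  rw [Svar_add_two, Real.rpow_neg hI.le, inv_pow, one_div, Real.rpow_inv_natCast_pow hI.le hk]

lemma hasDerivAt_Svar (hr : 0 < r) :
    HasDerivAt (Svar (k + 2) ψ) ((Svar (k + 2) ψ r / ψ r) ^ (k + 1)) r := by
  have hI := natCast_mul_tailIntegral_pos hk hcont hpos hint hr
  have hk' : (k : ℝ) ≠ 0 := Nat.cast_ne_zero.2 hk
  have hderiv := ((hasDerivAt_tailIntegral hcont hpos hint hr).const_mul (k : ℝ)).rpow_const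
    (p := -(1 / (k : ℝ))) (Or.inl hI.ne')
  have hpow : Svar (k + 2) ψ r ^ (k + 1)
      = (k * tailIntegral (k + 1) ψ r) ^ (-(1 / (k : ℝ)) - 1) := by
    rw [Real.rpow_sub_one hI.ne', ← Svar_add_two, pow_succ, Svar_pow hk hcont hpos hint hr,
      div_eq_mul_inv, mul_comm]
  rw [div_pow, hpow, funext (Svar_add_two k ψ)]
  exact hderiv.congr_deriv (by field_simp)

lemma strictMonoOn_Svar : StrictMonoOn (Svar (k + 2) ψ) (Ioi 0) := by
  have hderiv : ∀ r ∈ Ioi (0 : ℝ), HasDerivAt (Svar (k + 2) ψ) _ r :=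
    fun r hr => hasDerivAt_Svar hk hcont hpos hint hr
  refine strictMonoOn_of_hasDerivWithinAt_pos (convex_Ioi 0)
    (fun r hr => (hderiv r hr).continuousAt.continuousWithinAt)
    (fun r hr => (hderiv r (interior_subset hr)).hasDerivWithinAt) fun r hr => ?_
  have hr : 0 < r := interior_subset hr
  exact pow_pos (div_pos (Svar_pos hk hcont hpos hint hr) (hpos r hr)) _

lemma tendsto_Svar_atTop : Tendsto (Svar (k + 2) ψ) atTop atTop := by
  have hI : Tendsto (fun r => k * tailIntegral (k + 1) ψ r) atTop (𝓝[>] 0) := by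
    refine tendsto_nhdsWithin_iff.2
      ⟨by simpa using (tendsto_tailIntegral_atTop (k + 1) ψ).const_mul (k : ℝ), ?_⟩
    filter_upwards [eventually_gt_atTop 0] with r hr
    exact natCast_mul_tailIntegral_pos hk hcont hpos hint hr
  rw [funext (Svar_add_two k ψ)]
  exact (tendsto_rpow_neg_nhdsGT_zero (neg_lt_zero.2 (by positivity))).comp hI

end ChangeOfVariables

namespace classA

variable {ψ : ℝ → ℝ} (hψ : classA ψ)
include hψ

lemma pos {r : ℝ} (hr : 0 < r) : 0 < ψ r := hψ.2.2.2.2 r hr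

lemma differentiableAt {r : ℝ} (hr : 0 < r) : DifferentiableAt ℝ ψ r :=
  (hψ.1.differentiableOn (by simp)).differentiableAt (Ioi_mem_nhds hr)

lemma eventually_differentiableAt : ∀ᶠ r in atTop, DifferentiableAt ℝ ψ r := by
  filter_upwards [eventually_gt_atTop 0] with r hr using hψ.differentiableAt hr

lemma tendsto_nhdsGT_zero : Tendsto ψ (𝓝[>] 0) (𝓝[>] 0) := by
  have hzero : Tendsto ψ (𝓝[≥] 0) (𝓝 0) := by
    simpa only [hψ.2.2.1] using (hψ.2.1.continuousOn 0 self_mem_Ici).tendsto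
  refine tendsto_nhdsWithin_iff.2 ⟨hzero.mono_left (nhdsWithin_mono _ Ioi_subset_Ici_self), ?_⟩
  filter_upwards [self_mem_nhdsWithin] with r hr using hψ.pos hr

lemma tendsto_deriv_nhdsGT_zero : Tendsto (deriv ψ) (𝓝[>] 0) (𝓝 1) := by
  have hone : Tendsto (derivWithin ψ (Ici 0)) (𝓝[≥] 0) (𝓝 1) := by
    simpa only [hψ.2.2.2.1] using
      (hψ.2.1.continuousOn_derivWithin (uniqueDiffOn_Ici 0) le_rfl 0 self_mem_Ici).tendsto
  refine (hone.mono_left (nhdsWithin_mono _ Ioi_subset_Ici_self)).congr' ?_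
  filter_upwards [self_mem_nhdsWithin] with r hr using derivWithin_of_mem_nhds (Ici_mem_nhds hr)

end classA

section NearZero

lemma hasDerivAt_inv_natCast_mul_pow {k : ℕ} {f : ℝ → ℝ} {f' x : ℝ} (hk : k ≠ 0)
    (hf : HasDerivAt f f' x) (hne : f x ≠ 0) :
    HasDerivAt (fun y => (k * f y ^ k)⁻¹) (-(1 / f x ^ (k + 1) * f')) x := by
  obtain ⟨j, rfl⟩ := Nat.exists_eq_add_one_of_ne_zero hk
  refine ((hf.fun_pow (j + 1)).const_mul ((j + 1 : ℕ) : ℝ)).inv (by positivity) |>.congr_deriv ?_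
  rw [Nat.add_sub_cancel]
  field_simp
  ring

variable {k : ℕ} {ψ : ℝ → ℝ} (hk : k ≠ 0) (hψ : classA ψ)
  (hint : IntegrableAtFilter (fun t => 1 / ψ t ^ (k + 1)) atTop)
include hk hψ hint

lemma tailIntegral_isEquivalent_nhdsGT_zero :
    tailIntegral (k + 1) ψ ~[𝓝[>] 0] fun r => (k * ψ r ^ k)⁻¹ := by
  have hk' : (0 : ℝ) < k := by positivity
  have htop : Tendsto (fun r => (k * ψ r ^ k)⁻¹) (𝓝[>] 0) atTop := by
    have h := (tendsto_nhdsWithin_iff.1 hψ.tendsto_nhdsGT_zero).1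
    refine Tendsto.inv_tendsto_nhdsGT_zero (tendsto_nhdsWithin_iff.2 ⟨?_, ?_⟩)
    · simpa [hk] using (h.pow k).const_mul (k : ℝ)
    · filter_upwards [self_mem_nhdsWithin] with r hr
      exact mul_pos hk' (pow_pos (hψ.pos hr) k)
  refine isEquivalent_of_hasDerivAt (f' := fun r => -(1 / ψ r ^ (k + 1)))
    (g' := fun r => -(1 / ψ r ^ (k + 1) * deriv ψ r)) ?_ ?_ ?_
    (tendsto_abs_atTop_atTop.comp htop) (isEquivalent_of_tendsto_one ?_)
  · filter_upwards [self_mem_nhdsWithin] with r hr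
    exact hasDerivAt_tailIntegral hψ.1.continuousOn (fun _ => hψ.pos) hint hr
  · filter_upwards [self_mem_nhdsWithin] with r hr
    exact hasDerivAt_inv_natCast_mul_pow hk (hψ.differentiableAt hr).hasDerivAt (hψ.pos hr).ne'
  · filter_upwards [self_mem_nhdsWithin, hψ.tendsto_deriv_nhdsGT_zero.eventually_ne one_ne_zero]
      with r hr hr'
    exact neg_ne_zero.2 (mul_ne_zero (one_div_pos.2 (pow_pos (hψ.pos hr) _)).ne' hr')
  · refine (inv_one (G := ℝ) ▸ hψ.tendsto_deriv_nhdsGT_zero.inv₀ one_ne_zero).congr' ?_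
    filter_upwards [self_mem_nhdsWithin] with r hr
    have hψr := (hψ.pos hr).ne'
    simp only [Pi.div_apply]
    field_simp

lemma tendsto_div_Svar_nhdsGT_zero :
    Tendsto (fun r => ψ r / Svar (k + 2) ψ r) (𝓝[>] 0) (𝓝 1) := by
  have hratio := (isEquivalent_iff_tendsto_one (by
    filter_upwards [self_mem_nhdsWithin] with r hr
    have hψr := (hψ.pos hr).ne'
    positivity)).1 (tailIntegral_isEquivalent_nhdsGT_zero hk hψ hint)
  have hroot := hratio.rpow_const (p := (k : ℝ)⁻¹) (Or.inl one_ne_zero)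
  rw [Real.one_rpow] at hroot
  refine hroot.congr' ?_
  filter_upwards [self_mem_nhdsWithin] with r hr
  have hS := Svar_pos hk hψ.1.continuousOn (fun _ => hψ.pos) hint hr
  rw [← Real.pow_rpow_inv_natCast (div_pos (hψ.pos hr) hS).le hk, div_pow,
    Svar_pow hk hψ.1.continuousOn (fun _ => hψ.pos) hint hr, Pi.div_apply]
  congr 1
  field_simp

lemma tendsto_Svar_nhdsGT_zero : Tendsto (Svar (k + 2) ψ) (𝓝[>] 0) (𝓝 0) := by
  have h := (tendsto_nhdsWithin_iff.1 hψ.tendsto_nhdsGT_zero).1.div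
    (tendsto_div_Svar_nhdsGT_zero hk hψ hint) one_ne_zero
  rw [zero_div] at h
  refine h.congr' ?_
  filter_upwards [self_mem_nhdsWithin] with r hr
  exact div_div_cancel₀ (hψ.pos hr).ne'

end NearZero

section TailAsymptotics

lemma exp_neg_natCast_mul_log {x : ℝ} (hx : 0 < x) (m : ℕ) :
    Real.exp (-(m * Real.log x)) = 1 / x ^ m := by
  rw [Real.exp_neg, ← Real.log_pow, Real.exp_log (pow_pos hx m), one_div]

variable {m : ℕ} {ψ h : ℝ → ℝ}

lemma eventually_pos_comp_log (hψtop : Tendsto ψ atTop atTop) (hpos : ∀ᶠ τ in atTop, 0 < h τ) :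
    ∀ᶠ r in atTop, 0 < h (Real.log (ψ r)) :=
  (Real.tendsto_log_atTop.comp hψtop).eventually hpos

variable (hψd : ∀ᶠ r in atTop, DifferentiableAt ℝ ψ r) (hψtop : Tendsto ψ atTop atTop)
include hψd hψtop

lemma eventually_hasDerivAt_log :
    ∀ᶠ r in atTop, HasDerivAt (fun r => Real.log (ψ r)) (logDeriv ψ r) r := by
  filter_upwards [hψd, hψtop.eventually_gt_atTop 0] with r hr hψr
  exact hr.hasDerivAt.log hψr.ne'

variable (hd : ∀ᶠ τ in atTop, DifferentiableAt ℝ h τ) (hpos : ∀ᶠ τ in atTop, 0 < h τ)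
  (hlog : Tendsto (logDeriv h) atTop (𝓝 0))
  (hψ' : Tendsto (fun r => logDeriv ψ r / h (Real.log (ψ r))) atTop (𝓝 1))
include hψ'

lemma deriv_log_isEquivalent :
    deriv (fun r => Real.log (ψ r)) ~[atTop] h ∘ fun r => Real.log (ψ r) := by
  refine isEquivalent_of_tendsto_one (hψ'.congr' ?_)
  filter_upwards [eventually_hasDerivAt_log hψd hψtop] with r hr
  rw [Pi.div_apply, hr.deriv, Function.comp_apply]

include hpos

lemma exists_strictMonoOn_log :
    ∃ R, StrictMonoOn (fun r => Real.log (ψ r)) (Ici R) := by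
  have hlogDeriv : ∀ᶠ r in atTop, 0 < logDeriv ψ r := by
    filter_upwards [hψ'.eventually_const_lt one_pos, eventually_pos_comp_log hψtop hpos]
      with r hr hhr using (div_pos_iff_of_pos_right hhr).1 hr
  obtain ⟨R, hR⟩ := eventually_atTop.1 (hlogDeriv.and (eventually_hasDerivAt_log hψd hψtop))
  exact ⟨R, strictMonoOn_of_hasDerivWithinAt_pos (convex_Ici R)
    (fun r hr => (hR r hr).2.continuousAt.continuousWithinAt)
    (fun r hr => (hR r (interior_subset hr)).2.hasDerivWithinAt)
    fun r hr => (hR r (interior_subset hr)).1⟩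

include hd hlog

lemma integrableAtFilter_one_div_pow (hm : m ≠ 0) :
    IntegrableAtFilter (fun t => 1 / ψ t ^ m) atTop := by
  obtain ⟨a, ha⟩ := integrableAtFilter_atTop_iff.1 <|
    integrableAtFilter_exp_neg_mul (p := m) hd hpos hlog (by positivity)
      ((eventually_hasDerivAt_log hψd hψtop).mono fun r hr => hr.differentiableAt)
      (Real.tendsto_log_atTop.comp hψtop) (deriv_log_isEquivalent hψd hψtop hψ')
  obtain ⟨R, hR⟩ := eventually_atTop.1 (hψtop.eventually_gt_atTop 0)
  refine integrableAtFilter_atTop_iff.2 ⟨max a R, (ha.mono_set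
    (Ici_subset_Ici.2 (le_max_left a R))).congr_fun (fun t ht => ?_) measurableSet_Ici⟩
  exact exp_neg_natCast_mul_log (hR t ((le_max_right a R).trans ht)) m

lemma tailIntegral_isEquivalent_atTop (hm : m ≠ 0) :
    tailIntegral m ψ ~[atTop] fun r => 1 / ψ r ^ m / h (Real.log (ψ r)) / m := by
  have hequiv := integral_Ioi_exp_neg_mul_isEquivalent (p := m) hd hpos hlog (by positivity)
    ((eventually_hasDerivAt_log hψd hψtop).mono fun r hr => hr.differentiableAt)
    (Real.tendsto_log_atTop.comp hψtop) (deriv_log_isEquivalent hψd hψtop hψ')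
  have hψpos := hψtop.eventually_gt_atTop 0
  refine (hequiv.congr_left ?_).congr_right ?_
  · filter_upwards [eventually_forall_ge_atTop.2 hψpos] with r hr
    exact setIntegral_congr_fun measurableSet_Ioi fun t ht =>
      exp_neg_natCast_mul_log (hr t (mem_Ioi.1 ht).le) m
  · filter_upwards [hψpos] with r hr
    simp only [exp_neg_natCast_mul_log hr]

end TailAsymptotics

section NearInfinity

variable {k : ℕ} {ψ h : ℝ → ℝ} (hψ : classA ψ) (hψtop : Tendsto ψ atTop atTop)
  (hd : ∀ᶠ τ in atTop, DifferentiableAt ℝ h τ) (hpos : ∀ᶠ τ in atTop, 0 < h τ)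
  (hlog : Tendsto (logDeriv h) atTop (𝓝 0))
  (hψ' : Tendsto (fun r => logDeriv ψ r / h (Real.log (ψ r))) atTop (𝓝 1)) (hk : k ≠ 0)
include hψ hψtop hd hpos hlog hψ' hk

lemma eventually_Svar_pos : ∀ᶠ r in atTop, 0 < Svar (k + 2) ψ r := by
  filter_upwards [eventually_gt_atTop 0] with r hr
  exact Svar_pos hk hψ.1.continuousOn (fun _ => hψ.pos)
    (integrableAtFilter_one_div_pow hψ.eventually_differentiableAt hψtop hd hpos hlog hψ'
      k.succ_ne_zero) hr

lemma tendsto_Svar_pow_div :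
    Tendsto (fun r => Svar (k + 2) ψ r ^ k / (ψ r ^ (k + 1) * h (Real.log (ψ r)))) atTop
      (𝓝 ((k + 1) / k)) := by
  have hint := integrableAtFilter_one_div_pow hψ.eventually_differentiableAt hψtop hd hpos hlog hψ'
    k.succ_ne_zero
  have hequiv := (tailIntegral_isEquivalent_atTop hψ.eventually_differentiableAt hψtop hd hpos hlog
    hψ' k.succ_ne_zero).inv
  have hlim : Tendsto (fun r => ((k + 1) / k : ℝ) *
      ((tailIntegral (k + 1) ψ)⁻¹ / (fun r => 1 / ψ r ^ (k + 1) / h (Real.log (ψ r)) /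
        (k + 1 : ℕ))⁻¹) r) atTop (𝓝 ((k + 1) / k * 1)) := by
    refine ((isEquivalent_iff_tendsto_one ?_).1 hequiv).const_mul _
    filter_upwards [eventually_gt_atTop 0, eventually_pos_comp_log hψtop hpos] with r hr hhr
    have hψr := hψ.pos hr
    simp only [Pi.inv_apply]
    positivity
  rw [mul_one] at hlim
  refine hlim.congr' ?_
  filter_upwards [eventually_gt_atTop 0] with r hr
  rw [Svar_pow hk hψ.1.continuousOn (fun _ => hψ.pos) hint hr]
  simp only [Pi.div_apply, Pi.inv_apply, Nat.cast_add, Nat.cast_one]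
  field_simp

lemma tendsto_deriv_mul_div_Svar_pow :
    Tendsto (fun r => deriv ψ r * (ψ r / Svar (k + 2) ψ r) ^ k) atTop (𝓝 (k / (k + 1))) := by
  have hlim := hψ'.div (tendsto_Svar_pow_div hψ hψtop hd hpos hlog hψ' hk) (by positivity)
  rw [one_div_div] at hlim
  refine hlim.congr' ?_
  filter_upwards [eventually_gt_atTop 0, eventually_pos_comp_log hψtop hpos] with r hr hhr
  have hψr := hψ.pos hr
  simp only [Pi.div_apply, logDeriv_apply, div_pow]
  field_simp
  ring

variable (hinv : ∀ ε : ℝ → ℝ, Tendsto ε atTop (𝓝 0) →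
  Tendsto (fun τ => h (τ + 1 / (k + 1) * Real.log (h τ)
    + 1 / (k + 1) * Real.log ((k + 1) / k) + ε τ) / h τ) atTop (𝓝 1))
include hinv

lemma tendsto_comp_log_Svar_div :
    Tendsto (fun r => h (k / (k + 1) * Real.log (Svar (k + 2) ψ r)) / h (Real.log (ψ r))) atTop
      (𝓝 1) := by
  obtain ⟨R, hmono⟩ := exists_strictMonoOn_log hψ.eventually_differentiableAt hψtop hpos hψ'
  have herror : Tendsto (fun r => 1 / (k + 1) * (Real.log
      (Svar (k + 2) ψ r ^ k / (ψ r ^ (k + 1) * h (Real.log (ψ r)))) -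
        Real.log ((k + 1) / k))) atTop (𝓝 0) := by
    simpa using (((tendsto_Svar_pow_div hψ hψtop hd hpos hlog hψ' hk).log
      (by positivity)).sub_const (Real.log ((k + 1) / k))).const_mul (1 / (k + 1) : ℝ)
  refine (tendsto_comp_of_forall_tendsto (F := fun τ x => h (τ + 1 / (k + 1) * Real.log (h τ)
    + 1 / (k + 1) * Real.log ((k + 1) / k) + x) / h τ) hinv hmono
    (Real.tendsto_log_atTop.comp hψtop) herror).congr' ?_
  filter_upwards [eventually_gt_atTop 0, eventually_pos_comp_log hψtop hpos,
    eventually_Svar_pos hψ hψtop hd hpos hlog hψ' hk] with r hr hhr hSr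
  have hψr := hψ.pos hr
  have hlog_ratio : Real.log (Svar (k + 2) ψ r ^ k / (ψ r ^ (k + 1) * h (Real.log (ψ r)))) =
      k * Real.log (Svar (k + 2) ψ r) -
        ((k + 1) * Real.log (ψ r) + Real.log (h (Real.log (ψ r)))) := by
    rw [Real.log_div (by positivity) (by positivity), Real.log_mul (by positivity) hhr.ne',
      Real.log_pow, Real.log_pow, Nat.cast_add_one]
  rw [hlog_ratio]
  congr 2
  field_simp
  ring

lemma tendsto_div_Svar_pow_div :
    Tendsto (fun r => (ψ r / Svar (k + 2) ψ r) ^ (2 * (k + 1)) / ((k / (k + 1)) ^ 2 /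
      (Svar (k + 2) ψ r ^ 2 * h (k / (k + 1) * Real.log (Svar (k + 2) ψ r)) ^ 2))) atTop
      (𝓝 1) := by
  have hk' : (k : ℝ) ≠ 0 := Nat.cast_ne_zero.2 hk
  have hlim := (((tendsto_comp_log_Svar_div hψ hψtop hd hpos hlog hψ' hk hinv).div
    (tendsto_Svar_pow_div hψ hψtop hd hpos hlog hψ' hk) (by positivity)).mul_const
      ((k + 1) / k : ℝ)).pow 2
  rw [one_div_div, div_mul_div_cancel₀ (by positivity), div_self hk', one_pow] at hlim
  refine hlim.congr' ?_
  filter_upwards [eventually_pos_comp_log hψtop hpos,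
    eventually_Svar_pos hψ hψtop hd hpos hlog hψ' hk] with r hhr hSr
  simp only [Pi.div_apply, div_pow]
  field_simp
  ring

end NearInfinity

section Weight

/-- The inverse `r = r(s)` of the change of variables `s = Svar n ψ r` on `(0, ∞)`; the values at
points outside `Svar n ψ '' (0, ∞)` are irrelevant. -/
noncomputable def radius (n : ℕ) (ψ : ℝ → ℝ) : ℝ → ℝ :=
  Function.invFunOn (Svar n ψ) (Ioi 0)

/-- The weight `ρ(s) = ψ(r(s))^{2(n-1)} / s^{2(n-1)}` associated with `ψ` in dimension `n`. -/
noncomputable def weight (n : ℕ) (ψ : ℝ → ℝ) (s : ℝ) : ℝ :=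
  ψ (radius n ψ s) ^ (2 * (n - 1)) / s ^ (2 * (n - 1))

lemma weight_add_two (k : ℕ) (ψ : ℝ → ℝ) (s : ℝ) :
    weight (k + 2) ψ s = (ψ (radius (k + 2) ψ s) / s) ^ (2 * (k + 1)) :=
  (div_pow _ _ _).symm

variable {k : ℕ} {ψ : ℝ → ℝ} {s : ℝ} (hk : k ≠ 0) (hψ : classA ψ)
  (hint : IntegrableAtFilter (fun t => 1 / ψ t ^ (k + 1)) atTop)
include hk hψ hint

lemma bijOn_Svar : BijOn (Svar (k + 2) ψ) (Ioi 0) (Ioi 0) :=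
  bijOn_Ioi_of_tendsto (strictMonoOn_Svar hk hψ.1.continuousOn (fun _ => hψ.pos) hint)
    (fun _ hr => (hasDerivAt_Svar hk hψ.1.continuousOn (fun _ => hψ.pos) hint
      hr).continuousAt.continuousWithinAt)
    (tendsto_Svar_nhdsGT_zero hk hψ hint)
    (tendsto_Svar_atTop hk hψ.1.continuousOn (fun _ => hψ.pos) hint)

lemma invOn_radius : InvOn (radius (k + 2) ψ) (Svar (k + 2) ψ) (Ioi 0) (Ioi 0) :=
  (bijOn_Svar hk hψ hint).invOn_invFunOn

lemma bijOn_radius : BijOn (radius (k + 2) ψ) (Ioi 0) (Ioi 0) :=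
  (bijOn_Svar hk hψ hint).symm (invOn_radius hk hψ hint).symm

lemma monotoneOn_radius : MonotoneOn (radius (k + 2) ψ) (Ioi 0) :=
  Function.monotoneOn_of_rightInvOn_of_mapsTo
    (strictMonoOn_Svar hk hψ.1.continuousOn (fun _ => hψ.pos) hint).monotoneOn
    (invOn_radius hk hψ hint).2 (bijOn_radius hk hψ hint).mapsTo

lemma tendsto_radius_atTop : Tendsto (radius (k + 2) ψ) atTop atTop :=
  tendsto_atTop_of_monotoneOn_of_surjOn (monotoneOn_radius hk hψ hint)
    (bijOn_radius hk hψ hint).surjOn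

lemma tendsto_radius_nhdsGT_zero : Tendsto (radius (k + 2) ψ) (𝓝[>] 0) (𝓝[>] 0) :=
  tendsto_nhdsGT_of_monotoneOn_of_image_eq (monotoneOn_radius hk hψ hint)
    (bijOn_radius hk hψ hint).image_eq

lemma hasDerivAt_radius (hs : 0 < s) :
    HasDerivAt (radius (k + 2) ψ) ((ψ (radius (k + 2) ψ s) / s) ^ (k + 1)) s := by
  have hr : 0 < radius (k + 2) ψ s := (bijOn_radius hk hψ hint).mapsTo hs
  have hS := hasDerivAt_Svar hk hψ.1.continuousOn (fun _ => hψ.pos) hint hr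
  rw [(invOn_radius hk hψ hint).2 hs] at hS
  refine (hasDerivAt_of_rightInvOn_Ioi
    (strictMonoOn_Svar hk hψ.1.continuousOn (fun _ => hψ.pos) hint) (bijOn_radius hk hψ hint)
    (invOn_radius hk hψ hint).2 hs hS (pow_pos (div_pos hs (hψ.pos hr)) _).ne').congr_deriv ?_
  rw [← inv_pow, inv_div]

lemma contDiffOn_radius : ContDiffOn ℝ (⊤ : ℕ∞) (radius (k + 2) ψ) (Ioi 0) := by
  refine contDiffOn_infty_of_hasDerivAt (F := fun p => (ψ p.2 / p.1) ^ (k + 1))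
    (V := Ioi 0 ×ˢ Ioi 0) isOpen_Ioi ?_
    (fun s hs => ⟨hs, (bijOn_radius hk hψ hint).mapsTo hs⟩)
    fun s hs => hasDerivAt_radius hk hψ hint hs
  exact ((hψ.1.comp contDiffOn_snd fun p hp => hp.2).div contDiffOn_fst
    fun p hp => (mem_Ioi.1 hp.1).ne').pow (k + 1)

lemma contDiffOn_weight : ContDiffOn ℝ (⊤ : ℕ∞) (weight (k + 2) ψ) (Ioi 0) :=
  ((hψ.1.comp (contDiffOn_radius hk hψ hint) (bijOn_radius hk hψ hint).mapsTo).pow _).div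
    (contDiffOn_id.pow _) fun _ hs => (pow_pos hs _).ne'

lemma weight_pos (hs : 0 < s) : 0 < weight (k + 2) ψ s :=
  div_pos (pow_pos (hψ.pos ((bijOn_radius hk hψ hint).mapsTo hs)) _) (pow_pos hs _)

lemma mul_logDeriv_weight (hs : 0 < s) :
    s * logDeriv (weight (k + 2) ψ) s = (2 * (k + 1) : ℕ) *
      (deriv ψ (radius (k + 2) ψ s) * (ψ (radius (k + 2) ψ s) / s) ^ k - 1) := by
  have hr : 0 < radius (k + 2) ψ s := (bijOn_radius hk hψ hint).mapsTo hs
  have hψr := (hψ.pos hr).ne'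
  have hcomp : HasDerivAt (fun s => ψ (radius (k + 2) ψ s))
      (deriv ψ (radius (k + 2) ψ s) * (ψ (radius (k + 2) ψ s) / s) ^ (k + 1)) s :=
    (hψ.differentiableAt hr).hasDerivAt.comp s (hasDerivAt_radius hk hψ hint hs)
  rw [funext (weight_add_two k ψ), logDeriv_fun_pow
    (hcomp.differentiableAt.fun_div differentiableAt_fun_id hs.ne'),
    logDeriv_div s hψr hs.ne' hcomp.differentiableAt differentiableAt_fun_id, logDeriv_id',
    logDeriv_apply, hcomp.deriv, pow_succ]
  field_simp

lemma tendsto_div_radius_nhdsGT_zero :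
    Tendsto (fun s => ψ (radius (k + 2) ψ s) / s) (𝓝[>] 0) (𝓝 1) :=
  tendsto_comp_of_rightInvOn (G := fun s r => ψ r / s) (invOn_radius hk hψ hint).2
    self_mem_nhdsWithin (tendsto_radius_nhdsGT_zero hk hψ hint)
    (tendsto_div_Svar_nhdsGT_zero hk hψ hint)

lemma tendsto_mul_logDeriv_weight_nhdsGT_zero :
    Tendsto (fun s => s * logDeriv (weight (k + 2) ψ) s) (𝓝[>] 0) (𝓝 0) := by
  have hlim := (((hψ.tendsto_deriv_nhdsGT_zero.comp (tendsto_radius_nhdsGT_zero hk hψ hint)).mul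
    ((tendsto_div_radius_nhdsGT_zero hk hψ hint).pow k)).sub_const 1).const_mul
      ((2 * (k + 1) : ℕ) : ℝ)
  rw [one_pow, mul_one, sub_self, mul_zero] at hlim
  refine hlim.congr' ?_
  filter_upwards [self_mem_nhdsWithin] with s hs
  exact (mul_logDeriv_weight hk hψ hint hs).symm

lemma classB_weight : classB (weight (k + 2) ψ) := by
  have hone : Tendsto (weight (k + 2) ψ) (𝓝[>] 0) (𝓝 1) := by
    simpa only [funext (weight_add_two k ψ), one_pow] using
      (tendsto_div_radius_nhdsGT_zero hk hψ hint).pow (2 * (k + 1))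
  refine ⟨contDiffOn_weight hk hψ hint, hone, ?_, fun s hs => weight_pos hk hψ hint hs⟩
  have hlim := (tendsto_mul_logDeriv_weight_nhdsGT_zero hk hψ hint).mul hone
  rw [zero_mul] at hlim
  refine hlim.congr' ?_
  filter_upwards [self_mem_nhdsWithin] with s hs
  rw [logDeriv_apply, mul_assoc, div_mul_cancel₀ _ (weight_pos hk hψ hint hs).ne']

end Weight

section WeightAtInfinity

variable {k : ℕ} {ψ h : ℝ → ℝ} (hψ : classA ψ) (hψtop : Tendsto ψ atTop atTop)
  (hd : ∀ᶠ τ in atTop, DifferentiableAt ℝ h τ) (hpos : ∀ᶠ τ in atTop, 0 < h τ)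
  (hlog : Tendsto (logDeriv h) atTop (𝓝 0))
  (hψ' : Tendsto (fun r => logDeriv ψ r / h (Real.log (ψ r))) atTop (𝓝 1)) (hk : k ≠ 0)
include hψ hψtop hd hpos hlog hψ' hk

lemma tendsto_mul_logDeriv_weight_atTop :
    Tendsto (fun s => s * logDeriv (weight (k + 2) ψ) s) atTop (𝓝 (-2)) := by
  have hint := integrableAtFilter_one_div_pow hψ.eventually_differentiableAt hψtop hd hpos hlog hψ'
    k.succ_ne_zero
  have hlim := ((tendsto_comp_of_rightInvOn (G := fun s r => deriv ψ r * (ψ r / s) ^ k)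
    (invOn_radius hk hψ hint).2 (Ioi_mem_atTop 0) (tendsto_radius_atTop hk hψ hint)
    (tendsto_deriv_mul_div_Svar_pow hψ hψtop hd hpos hlog hψ' hk)).sub_const 1).const_mul
      ((2 * (k + 1) : ℕ) : ℝ)
  have hconst : ((2 * (k + 1) : ℕ) : ℝ) * (k / (k + 1) - 1) = -2 := by
    push_cast
    field_simp
    ring
  rw [hconst] at hlim
  refine hlim.congr' ?_
  filter_upwards [eventually_gt_atTop 0] with s hs
  exact (mul_logDeriv_weight hk hψ hint hs).symm

lemma tendsto_weight_div (hinv : ∀ ε : ℝ → ℝ, Tendsto ε atTop (𝓝 0) →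
    Tendsto (fun τ => h (τ + 1 / (k + 1) * Real.log (h τ)
      + 1 / (k + 1) * Real.log ((k + 1) / k) + ε τ) / h τ) atTop (𝓝 1)) :
    Tendsto (fun s => weight (k + 2) ψ s /
      ((k / (k + 1)) ^ 2 / (s ^ 2 * h (k / (k + 1) * Real.log s) ^ 2))) atTop (𝓝 1) := by
  have hint := integrableAtFilter_one_div_pow hψ.eventually_differentiableAt hψtop hd hpos hlog hψ'
    k.succ_ne_zero
  simp only [weight_add_two]
  exact tendsto_comp_of_rightInvOn (G := fun s r => (ψ r / s) ^ (2 * (k + 1)) /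
      ((k / (k + 1)) ^ 2 / (s ^ 2 * h (k / (k + 1) * Real.log s) ^ 2)))
    (invOn_radius hk hψ hint).2 (Ioi_mem_atTop 0) (tendsto_radius_atTop hk hψ hint)
    (tendsto_div_Svar_pow_div hψ hψtop hd hpos hlog hψ' hk hinv)

end WeightAtInfinity

/-- Theorem 7.1 of the paper, direct part. For `n ≥ 3` and `ψ ∈ 𝒜`
with `ψ → +∞`, admitting `h ∈ C¹(ℝ)` positive with `h'/h → 0`, the scaling-invariance
property (ii), and `(log ψ)'(r)/h(log ψ(r)) → 1`, the change of variables is a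
well-defined increasing bijection of `(0,∞)` onto itself and the associated weight
`ρ(s) = ψ(r(s))^{2(n-1)}/s^{2(n-1)}` belongs to `ℬ` and satisfies
`ρ(s) ∼ ((n-2)/(n-1))² / (s² h(((n-2)/(n-1)) log s)²)` and `s ρ'(s)/ρ(s) → -2`. -/
theorem stmt_7
    (n : ℕ) (hn : 3 ≤ n) (ψ : ℝ → ℝ) (hψA : classA ψ)
    (hψtop : Filter.Tendsto ψ Filter.atTop Filter.atTop)
    (h : ℝ → ℝ) (hh1 : ContDiff ℝ 1 h) (hhpos : ∀ τ : ℝ, 0 < h τ)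
    (hi : Filter.Tendsto (fun τ => deriv h τ / h τ) Filter.atTop (nhds 0))
    (hii : ∀ ε : ℝ → ℝ, Filter.Tendsto ε Filter.atTop (nhds 0) →
      Filter.Tendsto (fun τ =>
          h (τ + (1 / ((n : ℝ) - 1)) * Real.log (h τ)
              + (1 / ((n : ℝ) - 1)) * Real.log (((n : ℝ) - 1) / ((n : ℝ) - 2)) + ε τ)
            / h τ)
        Filter.atTop (nhds 1))
    (hiii : Filter.Tendsto (fun r => (deriv ψ r / ψ r) / h (Real.log (ψ r)))
      Filter.atTop (nhds 1)) :
    MeasureTheory.IntegrableOn (fun t => 1 / ψ t ^ (n - 1)) (Set.Ioi 1) ∧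
    StrictMonoOn (Svar n ψ) (Set.Ioi 0) ∧
    Set.BijOn (Svar n ψ) (Set.Ioi 0) (Set.Ioi 0) ∧
    ∃ rOf : ℝ → ℝ,
      (∀ r > (0 : ℝ), rOf (Svar n ψ r) = r) ∧
      (∀ s > (0 : ℝ), Svar n ψ (rOf s) = s) ∧
      classB (fun s => ψ (rOf s) ^ (2 * (n - 1)) / s ^ (2 * (n - 1))) ∧
      Filter.Tendsto (fun s =>
          (ψ (rOf s) ^ (2 * (n - 1)) / s ^ (2 * (n - 1))) /
            ((((n : ℝ) - 2) / ((n : ℝ) - 1)) ^ 2 /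
              (s ^ 2 * (h (((n : ℝ) - 2) / ((n : ℝ) - 1) * Real.log s)) ^ 2)))
        Filter.atTop (nhds 1) ∧
      Filter.Tendsto (fun s =>
          s * deriv (fun σ => ψ (rOf σ) ^ (2 * (n - 1)) / σ ^ (2 * (n - 1))) s /
            (ψ (rOf s) ^ (2 * (n - 1)) / s ^ (2 * (n - 1))))
        Filter.atTop (nhds (-2)) := by
  obtain ⟨k, rfl⟩ := Nat.exists_eq_add_of_le' (Nat.le_of_succ_le hn)
  have hk : k ≠ 0 := by omega
  have hcast_one : ((k + 2 : ℕ) : ℝ) - 1 = k + 1 := by push_cast; ring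
  have hcast_two : ((k + 2 : ℕ) : ℝ) - 2 = k := by push_cast; ring
  rw [hcast_one, hcast_two] at hii
  rw [hcast_one, hcast_two]
  have hd : ∀ᶠ τ in Filter.atTop, DifferentiableAt ℝ h τ :=
    .of_forall (hh1.differentiable one_ne_zero)
  have hpos : ∀ᶠ τ in Filter.atTop, 0 < h τ := .of_forall hhpos
  have hint := integrableAtFilter_one_div_pow hψA.eventually_differentiableAt hψtop hd hpos hi hiii
    k.succ_ne_zero
  refine ⟨integrableOn_Ioi_one_div_pow hψA.1.continuousOn (fun _ => hψA.pos) hint one_pos,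
    strictMonoOn_Svar hk hψA.1.continuousOn (fun _ => hψA.pos) hint, bijOn_Svar hk hψA hint,
    radius (k + 2) ψ, (invOn_radius hk hψA hint).1, (invOn_radius hk hψA hint).2,
    classB_weight hk hψA hint, tendsto_weight_div hψA hψtop hd hpos hi hiii hk hii, ?_⟩
  exact (tendsto_mul_logDeriv_weight_atTop hψA hψtop hd hpos hi hiii hk).congr
    fun s => (mul_div_assoc _ _ _).symm
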